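/- Let n be a natural number with prime factorisation n = p_1^{α_1} ⋯ p_t^{α_t} (the p_i distinct primes). Then every skew brace of order n is left-nilpotent if and only if p_i does not divide p_j^k − 1 for all i ≠ j and all 1 ≤ k ≤ α_j. -/

import Mathlib

/-- A skew (left) brace: a set with two group structures `(A,+)` and `(A,∘)`
(the latter written multiplicatively) satisfying
`a ∘ (b + c) = a ∘ b - a + a ∘ c`. -/
class SkewBrace (A : Type*) extends AddGroup A, Group A where
  skew_left_distrib : ∀ a b c : A, a * (b + c) = a * b - a + a * c

/-- The left series of a skew brace: `A^1 = A` (index `0` here) and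
`A^{m+1} = A ∗ A^m`, the subgroup of `(A,+)` generated by the star products
`a ∗ b = -a + a ∘ b - b` with `a ∈ A`, `b ∈ A^m`. -/
def leftSeries (A : Type*) [SkewBrace A] : ℕ → AddSubgroup A
  | 0 => ⊤
  | m + 1 => AddSubgroup.closure
      {x : A | ∃ a : A, ∃ b ∈ leftSeries A m, x = -a + a * b - b}

/-- A skew brace is left-nilpotent if `A^m = {0}` for some `m`. -/
def IsLeftNilpotent (A : Type*) [SkewBrace A] : Prop :=
  ∃ m : ℕ, leftSeries A m = ⊥

universe u

/-- The carrier of the counterexample. -/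
structure CEx (F C M : Type) where
  x : F
  c : C
  m : M

def CEx.equiv (F C M : Type) : CEx F C M ≃ F × C × M where
  toFun a := (a.x, a.c, a.m)
  invFun a := ⟨a.1, a.2.1, a.2.2⟩
  left_inv _ := rfl
  right_inv _ := rfl

theorem CEx.ext' {F C M : Type} {a b : CEx F C M} (h1 : a.x = b.x) (h2 : a.c = b.c)
    (h3 : a.m = b.m) : a = b := by
  cases a; cases b; simp_all

section
variable (F M : Type) [Field F] [AddCommGroup M] (C : Subgroup Fˣ)

@[reducible] def CEx.addGroup : AddGroup (CEx F C M) :=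
  letI : Add (CEx F C M) := ⟨fun a b => ⟨a.x + b.x, a.c * b.c, a.m + b.m⟩⟩
  letI : Zero (CEx F C M) := ⟨⟨0, 1, 0⟩⟩
  letI : Neg (CEx F C M) := ⟨fun a => ⟨-a.x, a.c⁻¹, -a.m⟩⟩
  AddGroup.ofLeftAxioms
    (fun a b c => CEx.ext' (add_assoc _ _ _) (mul_assoc _ _ _) (add_assoc _ _ _))
    (fun a => CEx.ext' (zero_add _) (one_mul _) (zero_add _))
    (fun a => CEx.ext' (neg_add_cancel _) (inv_mul_cancel _) (neg_add_cancel _))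

@[reducible] def CEx.group : Group (CEx F C M) :=
  letI : Mul (CEx F C M) := ⟨fun a b => ⟨a.x + ((a.c : Fˣ) : F) * b.x, a.c * b.c, a.m + b.m⟩⟩
  letI : One (CEx F C M) := ⟨⟨0, 1, 0⟩⟩
  letI : Inv (CEx F C M) := ⟨fun a => ⟨-(((a.c⁻¹ : C) : Fˣ) : F) * a.x, a.c⁻¹, -a.m⟩⟩
  Group.ofLeftAxioms
    (fun a b c => CEx.ext' (by
        change (a.x + ((a.c : Fˣ) : F) * b.x) + (((a.c * b.c : C) : Fˣ) : F) * c.x =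
          a.x + ((a.c : Fˣ) : F) * (b.x + ((b.c : Fˣ) : F) * c.x)
        push_cast; ring) (mul_assoc _ _ _) (add_assoc _ _ _))
    (fun a => CEx.ext' (by
        change 0 + (((1 : C) : Fˣ) : F) * a.x = a.x
        simp) (one_mul _) (zero_add _))
    (fun a => CEx.ext' (by
        change -(((a.c⁻¹ : C) : Fˣ) : F) * a.x + (((a.c⁻¹ : C) : Fˣ) : F) * a.x = 0
        ring) (inv_mul_cancel _) (neg_add_cancel _))

@[reducible] def CEx.skewBrace : SkewBrace (CEx F C M) :=
  { CEx.addGroup F M C, CEx.group F M C with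
    skew_left_distrib := fun a b c => CEx.ext' (by
        change a.x + ((a.c : Fˣ) : F) * (b.x + c.x) =
          (a.x + ((a.c : Fˣ) : F) * b.x) + -a.x + (a.x + ((a.c : Fˣ) : F) * c.x)
        ring) (by
        change a.c * (b.c * c.c) = (a.c * b.c) * a.c⁻¹ * (a.c * c.c)
        rw [mul_inv_cancel_comm, mul_left_comm]) (by
        change a.m + (b.m + c.m) = a.m + b.m + -a.m + (a.m + c.m)
        abel) }

theorem CEx.not_left (u : C) (hu : u ≠ 1) :
    ¬ @IsLeftNilpotent (CEx F C M) (CEx.skewBrace F M C) := by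
  letI := CEx.skewBrace F M C
  have key : ∀ m : ℕ, ∀ y : F, (⟨y, 1, 0⟩ : CEx F C M) ∈ leftSeries (CEx F C M) m := by
    intro m
    induction m with
    | zero => intro y; trivial
    | succ m ih =>
      intro y
      have h1 : ((u : Fˣ) : F) - 1 ≠ 0 := by
        intro h
        apply hu
        ext
        simpa using sub_eq_zero.mp h
      refine AddSubgroup.subset_closure ⟨⟨0, u, 0⟩, ⟨(((u : Fˣ) : F) - 1)⁻¹ * y, 1, 0⟩, ih _, ?_⟩
      refine CEx.ext' ?_ ?_ ?_
      · change y = (-0 + (0 + ((u : Fˣ) : F) * ((((u : Fˣ) : F) - 1)⁻¹ * y))) + - ((((u : Fˣ) : F) - 1)⁻¹ * y)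
        field_simp
        ring
      · change (1 : C) = u⁻¹ * (u * 1) * 1⁻¹
        simp
      · change (0 : M) = -0 + (0 + 0) + -0
        simp
  rintro ⟨m, hm⟩
  have h := key m 1
  rw [hm, AddSubgroup.mem_bot] at h
  have h2 : (1 : F) = 0 := congrArg CEx.x h
  exact one_ne_zero h2
end

theorem exists_cex (n : ℕ) (hn : 0 < n) (p q k : ℕ) (hp : p ∈ n.primeFactors)
    (hq : q ∈ n.primeFactors) (hpq : p ≠ q) (hk1 : 1 ≤ k) (hk2 : k ≤ n.factorization q)
    (hd : p ∣ q ^ k - 1) :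
    ∃ (A : Type) (_ : Fintype A) (_ : SkewBrace A), Fintype.card A = n ∧ ¬ IsLeftNilpotent A := by
  have hpp := Nat.prime_of_mem_primeFactors hp
  have hqp := Nat.prime_of_mem_primeFactors hq
  have : Fact p.Prime := ⟨hpp⟩
  have : Fact q.Prime := ⟨hqp⟩
  have hqk : q ^ k ∣ n := (hqp.pow_dvd_iff_le_factorization hn.ne').2 hk2
  have hpn := Nat.dvd_of_mem_primeFactors hp
  have hcop : Nat.Coprime (q ^ k) p := Nat.Coprime.pow_left _ ((Nat.coprime_primes hqp hpp).2 hpq.symm)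
  obtain ⟨m, hm⟩ := hcop.mul_dvd_of_dvd_of_dvd hqk hpn
  have hm0 : m ≠ 0 := by rintro rfl; simp at hm; omega
  have : NeZero m := ⟨hm0⟩
  let F := GaloisField q k
  have hF : Nat.card F = q ^ k := GaloisField.card q k (by omega)
  have : Finite F := Nat.finite_of_card_ne_zero (by rw [hF]; exact (pow_pos hqp.pos _).ne')
  have hFu : Nat.card Fˣ = q ^ k - 1 := by rw [Nat.card_units, hF]
  obtain ⟨u, hu⟩ := exists_prime_orderOf_dvd_card' (G := Fˣ) p (by rw [hFu]; exact hd)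
  let C := Subgroup.zpowers u
  have hC : Nat.card C = p := by rw [Nat.card_zpowers, hu]
  have e := CEx.equiv F C (ZMod m)
  have : Finite (CEx F C (ZMod m)) := Finite.of_equiv _ e.symm
  letI ft : Fintype (CEx F C (ZMod m)) := Fintype.ofFinite _
  refine ⟨CEx F C (ZMod m), ft, CEx.skewBrace F (ZMod m) C, ?_,
    CEx.not_left F (ZMod m) C ⟨u, Subgroup.mem_zpowers u⟩ ?_⟩
  · rw [← Nat.card_eq_fintype_card, Nat.card_congr e, Nat.card_prod, Nat.card_prod, hF, hC,
      Nat.card_zmod, hm, mul_assoc]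
  · intro h
    have : u = 1 := congrArg Subtype.val h
    rw [this, orderOf_one] at hu
    exact hpp.one_lt.ne hu

section Schmidt
variable {G : Type*} [Group G] [Finite G]

theorem coatoms_inf_eq_bot [IsSimpleGroup G]
    (hnil : ∀ H : Subgroup G, H ≠ ⊤ → Group.IsNilpotent H) :
    ∀ D : Subgroup G, D ≠ ⊥ → ∀ M N : Subgroup G, IsCoatom M → IsCoatom N → M ⊓ N = D → M = N := by
  intro D
  induction D using WellFoundedGT.induction with
  | ind D ih =>
  intro hD M N hM hN hMN
  by_contra hne
  have hDM : D < M := by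
    refine lt_of_le_of_ne (hMN ▸ inf_le_left) ?_
    rintro rfl
    have : D ≤ N := inf_eq_left.mp hMN
    rcases hM.le_iff.mp this with h | h
    · exact hN.1 h
    · exact hne h.symm
  have hDN : D < N := by
    refine lt_of_le_of_ne (hMN ▸ inf_le_right) ?_
    rintro rfl
    have : D ≤ M := inf_eq_right.mp hMN
    rcases hN.le_iff.mp this with h | h
    · exact hM.1 h
    · exact hne h
  have hnorm : Subgroup.normalizer (D : Set G) ≠ ⊤ := by
    intro h
    have hn : D.Normal := Subgroup.normalizer_eq_top_iff.mp h
    rcases hn.eq_bot_or_eq_top with h | h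
    · exact hD h
    · exact (h ▸ hDM).not_ge le_top
  obtain ⟨L, hL, hle⟩ := (eq_top_or_exists_le_coatom (Subgroup.normalizer (D : Set G))).resolve_left hnorm
  have key : ∀ K : Subgroup G, IsCoatom K → D < K → L = K := by
    intro K hK hDK
    have := hnil K hK.1
    have hnc : NormalizerCondition K := Group.normalizerCondition_of_isNilpotent
    have h1 : D.subgroupOf K < ⊤ := by
      rw [lt_top_iff_ne_top, Ne, Subgroup.subgroupOf_eq_top]
      exact hDK.not_ge
    have h2 := hnc _ h1
    rw [← Subgroup.subgroupOf_normalizer_eq hDK.le] at h2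
    obtain ⟨x, hx1, hx2⟩ := SetLike.exists_of_lt h2
    refine ih (L ⊓ K) ?_ ?_ L K hL hK rfl
    · refine lt_of_le_of_ne (le_inf (Subgroup.le_normalizer.trans hle) hDK.le) ?_
      intro h
      apply hx2
      rw [Subgroup.mem_subgroupOf] at hx1 ⊢
      rw [h]
      exact ⟨hle hx1, x.2⟩
    · intro h
      apply hD
      rw [eq_bot_iff, ← h]
      exact le_inf (Subgroup.le_normalizer.trans hle) hDK.le
  exact hne ((key M hM hDM).symm.trans (key N hN hDN))

theorem coatom_conj {M : Subgroup G} (hM : IsCoatom M) (g : G) :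
    IsCoatom (M.map (MulAut.conj g).toMonoidHom) :=
  ((MulEquiv.mapSubgroup (MulAut.conj g)).isCoatom_iff M).2 hM

theorem conj_meet [IsSimpleGroup G]
    (hnil : ∀ H : Subgroup G, H ≠ ⊤ → Group.IsNilpotent H) {M K : Subgroup G}
    (hM : IsCoatom M) (hK : IsCoatom K) {g h m k : G} (hm : m ∈ M) (hk : k ∈ K) (hm1 : m ≠ 1)
    (e : g * m * g⁻¹ = h * k * h⁻¹) :
    M.map (MulAut.conj g).toMonoidHom = K.map (MulAut.conj h).toMonoidHom := by
  refine coatoms_inf_eq_bot hnil _ ?_ _ _ (coatom_conj hM g) (coatom_conj hK h) rfl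
  intro hb
  have : g * m * g⁻¹ ∈ M.map (MulAut.conj g).toMonoidHom ⊓ K.map (MulAut.conj h).toMonoidHom :=
    ⟨⟨m, hm, rfl⟩, ⟨k, hk, e.symm⟩⟩
  rw [hb, Subgroup.mem_bot] at this
  exact hm1 (by simpa using this)

noncomputable def cmap (M : Subgroup G) (x : (G ⧸ M) × {m : M // m ≠ 1}) : {x : G // x ≠ 1} :=
  ⟨x.1.out * (x.2.1 : G) * (x.1.out)⁻¹, by
    intro h
    apply x.2.2
    ext
    simpa using h⟩

theorem card_ne_add_one {α : Type*} [Finite α] (a : α) :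
    Nat.card {x : α // x ≠ a} + 1 = Nat.card α := by
  classical
  rw [← Finite.card_option, Nat.card_congr (Equiv.optionSubtypeNe a)]

theorem conj_norm {M : Subgroup G} {g k : G}
    (h : M.map (MulAut.conj g).toMonoidHom = M.map (MulAut.conj k).toMonoidHom) :
    g⁻¹ * k ∈ Subgroup.normalizer (M : Set G) := by
  rw [Subgroup.mem_normalizer_iff]
  intro x
  have hx : ∀ (g y : G), y ∈ M.map (MulAut.conj g).toMonoidHom ↔ g⁻¹ * y * g ∈ M := by
    intro g y
    constructor
    · rintro ⟨z, hz, rfl⟩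
      simpa [mul_assoc] using hz
    · intro hy
      exact ⟨_, hy, by simp [mul_assoc]⟩
  have h3 := hx g (k * x * k⁻¹)
  have h4 := hx k (k * x * k⁻¹)
  rw [h, h4] at h3
  simpa [mul_assoc] using h3

theorem simple_schmidt [IsSimpleGroup G]
    (hnil : ∀ H : Subgroup G, H ≠ ⊤ → Group.IsNilpotent H) : ∀ a b : G, a * b = b * a := by
  by_contra hc
  have hz : ∀ x : G, Subgroup.zpowers x ≠ ⊤ := by
    intro x hx
    apply hc
    have : IsCyclic G := ⟨x, fun y => by
      have : y ∈ Subgroup.zpowers x := by rw [hx]; trivial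
      exact this⟩
    intro a b
    exact (IsCyclic.commGroup (α := G)).mul_comm a b
  have hcm : ∀ x : G, ∃ M : Subgroup G, IsCoatom M ∧ x ∈ M := by
    intro x
    obtain ⟨L, hL, hle⟩ := (eq_top_or_exists_le_coatom (Subgroup.zpowers x)).resolve_left (hz x)
    exact ⟨L, hL, hle (Subgroup.mem_zpowers x)⟩
  have hbot : ∀ M : Subgroup G, IsCoatom M → M ≠ ⊥ := by
    rintro M hM rfl
    obtain ⟨x, hx⟩ := exists_ne (1 : G)
    rcases hM.le_iff.mp (bot_le : ⊥ ≤ Subgroup.zpowers x) with h | h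
    · exact hz x h
    · exact hx (by simpa using h)
  have hself : ∀ M : Subgroup G, IsCoatom M → Subgroup.normalizer (M : Set G) = M := by
    intro M hM
    rcases hM.le_iff.mp (Subgroup.le_normalizer (H := M)) with h | h
    · have hn : M.Normal := Subgroup.normalizer_eq_top_iff.mp h
      rcases hn.eq_bot_or_eq_top with h | h
      · exact absurd h (hbot M hM)
      · exact absurd h hM.1
    · exact h
  have hinj : ∀ M : Subgroup G, IsCoatom M → Function.Injective (cmap M) := by
    rintro M hM ⟨c, m⟩ ⟨d, k⟩ e
    have e' : c.out * (m.1 : G) * (c.out)⁻¹ = d.out * (k.1 : G) * (d.out)⁻¹ := congrArg Subtype.val e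
    have hm1 : (m.1 : G) ≠ 1 := fun h => m.2 (by ext; exact h)
    have h := conj_meet hnil hM hM m.1.2 k.1.2 hm1 e'
    have hcd : c = d := by
      rw [← c.out_eq', ← d.out_eq']
      apply QuotientGroup.eq.2
      exact (hself M hM).le (conj_norm h)
    subst hcd
    have : m = k := by
      ext
      simpa using e'
    rw [this]
  have hcard : ∀ M : Subgroup G, Nat.card ((G ⧸ M) × {m : M // m ≠ 1}) + M.index = Nat.card G := by
    intro M
    have h1 : Nat.card {m : M // m ≠ 1} + 1 = Nat.card M := card_ne_add_one 1
    rw [Nat.card_prod, ← M.index_mul_card, ← h1, Subgroup.index]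
    ring
  have hcardM : ∀ M : Subgroup G, IsCoatom M → 2 * M.index ≤ Nat.card G := by
    intro M hM
    rw [← M.index_mul_card, mul_comm]
    exact Nat.mul_le_mul_left _ (M.one_lt_card_iff_ne_bot.2 (hbot M hM))
  have hG : Nat.card {x : G // x ≠ 1} + 1 = Nat.card G := card_ne_add_one 1
  obtain ⟨M, hM, -⟩ := hcm 1
  have hns : ¬ Function.Surjective (cmap M) := by
    intro hs
    have h1 := Nat.card_le_card_of_surjective _ hs
    have h2 := hcard M
    have h3 : M.index ≠ 1 := by rw [Ne, Subgroup.index_eq_one]; exact hM.1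
    have h4 : M.index ≠ 0 := Subgroup.index_ne_zero_of_finite
    omega
  simp only [Function.Surjective, not_forall] at hns
  obtain ⟨x, hx⟩ := hns
  obtain ⟨K, hK, hxK⟩ := hcm x
  have hdisj : ∀ a b, cmap M a ≠ cmap K b := by
    rintro ⟨c, m⟩ ⟨d, k⟩ e
    have e' : c.out * (m.1 : G) * (c.out)⁻¹ = d.out * (k.1 : G) * (d.out)⁻¹ := congrArg Subtype.val e
    have hm1 : (m.1 : G) ≠ 1 := fun h => m.2 (by ext; exact h)
    have h := conj_meet hnil hM hK m.1.2 k.1.2 hm1 e'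
    -- x ∈ conj of M
    have hxm : d.out * (x : G) * d.out⁻¹ ∈ M.map (MulAut.conj c.out).toMonoidHom := by
      rw [h]; exact ⟨x, hxK, rfl⟩
    obtain ⟨y, hy, hye⟩ := hxm
    have hye : c.out * y * c.out⁻¹ = d.out * (x : G) * d.out⁻¹ := hye
    obtain ⟨r, hr⟩ := QuotientGroup.mk_out_eq_mul M (d.out⁻¹ * c.out)
    apply hx
    have hxe : (x : G) = (d.out⁻¹ * c.out) * y * (d.out⁻¹ * c.out)⁻¹ := by
      have : (x : G) = d.out⁻¹ * (d.out * (x : G) * d.out⁻¹) * d.out := by group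
      rw [this, ← hye]; group
    have hz1 : (r : G)⁻¹ * y * r ∈ M := M.mul_mem (M.mul_mem (M.inv_mem r.2) hy) r.2
    refine ⟨(((d.out⁻¹ * c.out : G) : G ⧸ M), ⟨⟨_, hz1⟩, ?_⟩), ?_⟩
    · intro h0
      have h0 : (r : G)⁻¹ * y * r = 1 := congrArg Subtype.val h0
      apply x.2
      have : y = 1 := by
        have : y = r * ((r : G)⁻¹ * y * r) * (r : G)⁻¹ := by group
        rw [this, h0]; group
      rw [hxe, this]; group
    · ext
      change Quotient.out _ * ((r : G)⁻¹ * y * r) * (Quotient.out _)⁻¹ = (x : G)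
      rw [hr, hxe]; group
  have hsum := Nat.card_le_card_of_injective _ (Function.Injective.sumElim (hinj M hM) (hinj K hK) hdisj)
  rw [Nat.card_sum] at hsum
  have := hcard M
  have := hcard K
  have := hcardM M hM
  have := hcardM K hK
  omega
end Schmidt

def NilNum (n : ℕ) : Prop := ∀ p ∈ n.primeFactors, ∀ q ∈ n.primeFactors, p ≠ q →
      ∀ k : ℕ, 1 ≤ k → k ≤ n.factorization q → ¬ p ∣ q ^ k - 1

theorem NilNum.of_dvd {n d : ℕ} (hn : n ≠ 0) (h : NilNum n) (hd : d ∣ n) : NilNum d := by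
  intro p hp q hq hpq k h1 h2
  have hd0 : d ≠ 0 := ne_zero_of_dvd_ne_zero hn hd
  exact h p (Nat.primeFactors_mono hd hn hp) q (Nat.primeFactors_mono hd hn hq) hpq k h1
    (h2.trans ((Nat.factorization_le_iff_dvd hd0 hn).2 hd q))

theorem coprime_action {H Q : Type*} [Group H] [Group Q] [Finite Q] [MulDistribMulAction H Q]
    {r p a : ℕ} (hr : r.Prime) (hp : p.Prime) (hrp : r ≠ p) (hH : IsPGroup r H)
    (hQ : Nat.card Q = p ^ a) (hd : ∀ k, 1 ≤ k → k ≤ a → ¬ r ∣ p ^ k - 1) (h : H) (x : Q) :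
    h • x = x := by
  have : Fact r.Prime := ⟨hr⟩
  have h1 := hH.card_modEq_card_fixedPoints (α := Q)
  have h2 : Nat.card (FixedPoints.subgroup H Q) ∣ p ^ a := by
    rw [← hQ]; exact Subgroup.card_subgroup_dvd_card _
  obtain ⟨c, hc, hcc⟩ := (Nat.dvd_prime_pow hp).1 h2
  have h3 : Nat.card (MulAction.fixedPoints H Q) = p ^ c := hcc
  rw [h3, hQ] at h1
  rcases hc.eq_or_lt with rfl | hlt
  · have : FixedPoints.subgroup H Q = ⊤ := by
      apply Subgroup.eq_top_of_card_eq
      rw [hcc, hQ]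
    have hx : x ∈ FixedPoints.subgroup H Q := by rw [this]; trivial
    exact hx h
  · exfalso
    have h4 : r ∣ p ^ a - p ^ c := (Nat.modEq_iff_dvd' (Nat.pow_le_pow_right hp.pos hc)).1 h1.symm
    have h5 : p ^ a - p ^ c = p ^ c * (p ^ (a - c) - 1) := by
      rw [Nat.mul_sub, ← pow_add, mul_one, Nat.add_sub_cancel' hc]
    rw [h5] at h4
    rcases hr.dvd_mul.1 h4 with h6 | h6
    · exact hrp ((Nat.prime_dvd_prime_iff_eq hr hp).1 (hr.dvd_of_dvd_pow h6))
    · exact hd (a - c) (by omega) (by omega) h6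

theorem eq_top_of_sylow {G : Type*} [Group G] [Finite G] (H : Subgroup G)
    (h : ∀ p : ℕ, p.Prime → p ∣ Nat.card G → ∃ P : Sylow p G, (P : Subgroup G) ≤ H) : H = ⊤ := by
  apply Subgroup.eq_top_of_card_eq
  refine Nat.dvd_antisymm H.card_subgroup_dvd_card ?_
  rw [Nat.dvd_iff_prime_pow_dvd_dvd]
  intro p k hp hk
  have : Fact p.Prime := ⟨hp⟩
  rcases Nat.eq_zero_or_pos k with rfl | hk0
  · simp
  obtain ⟨P, hP⟩ := h p hp ((dvd_pow_self p hk0.ne').trans hk)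
  exact (P.pow_dvd_card_of_pow_dvd_card hk).trans (Subgroup.card_dvd_of_le hP)

theorem exists_normal_prime_index {G : Type u} [Group G] [Finite G] [Nontrivial G]
    [Group.IsSolvable G] : ∃ (C : Type u) (_ : CommGroup C) (f : G →* C),
      (Nat.card C).Prime ∧ Function.Surjective f := by
  have h := Group.IsSolvable.commutator_lt_top_of_nontrivial G
  have : Nontrivial (Abelianization G) := by
    have : Nontrivial (G ⧸ commutator G) := QuotientGroup.nontrivial_iff.2 h.ne
    exact this
  obtain ⟨K, hK, -⟩ := (eq_top_or_exists_le_coatom (⊥ : Subgroup (Abelianization G))).resolve_left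
    bot_ne_top
  refine ⟨Abelianization G ⧸ K, inferInstance, (QuotientGroup.mk' K).comp Abelianization.of, ?_, ?_⟩
  · have : IsSimpleGroup (Abelianization G ⧸ K) := by
      have : Nontrivial (Abelianization G ⧸ K) := QuotientGroup.nontrivial_iff.2 hK.1
      refine ⟨fun N _ => ?_⟩
      have h1 : K ≤ N.comap (QuotientGroup.mk' K) := by
        intro x hx
        rw [Subgroup.mem_comap, (QuotientGroup.eq_one_iff x).2 hx |> (show QuotientGroup.mk' K x = 1 from ·)]
        exact N.one_mem
      have hs : Function.Surjective (QuotientGroup.mk' K) := QuotientGroup.mk'_surjective K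
      rcases hK.le_iff.1 h1 with h2 | h2
      · right
        rw [← Subgroup.map_comap_eq_self_of_surjective hs N, h2, Subgroup.map_top_of_surjective _ hs]
      · left
        rw [← Subgroup.map_comap_eq_self_of_surjective hs N, h2]
        simp
    exact IsSimpleGroup.prime_card
  · exact (QuotientGroup.mk'_surjective K).comp (QuotientGroup.mk'_surjective (commutator G))

theorem nilNum_nilpotent : ∀ (n : ℕ) (G : Type u) [Group G] [Finite G], Nat.card G = n → NilNum n →
    Group.IsNilpotent G := by
  intro n
  induction n using Nat.strong_induction_on with
  | _ n ih =>
  intro G _ _ hG hn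
  have hn0 : n ≠ 0 := by rw [← hG]; exact Nat.card_pos.ne'
  rcases subsingleton_or_nontrivial G with hs | hs
  · infer_instance
  have hsub : ∀ H : Subgroup G, H ≠ ⊤ → Group.IsNilpotent H := by
    intro H hH
    have hd : Nat.card H ∣ n := hG ▸ H.card_subgroup_dvd_card
    refine ih (Nat.card H) ?_ H rfl (hn.of_dvd hn0 hd)
    refine lt_of_le_of_ne (Nat.le_of_dvd (Nat.pos_of_ne_zero hn0) hd) ?_
    intro h
    exact hH (Subgroup.eq_top_of_card_eq _ (by rw [h, hG]))
  have hsol : Group.IsSolvable G := by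
    by_cases hsimp : IsSimpleGroup G
    · exact Group.isSolvable_of_comm (simple_schmidt hsub)
    · have : ∃ N : Subgroup G, N.Normal ∧ N ≠ ⊥ ∧ N ≠ ⊤ := by
        by_contra hcon
        push Not at hcon
        exact hsimp ⟨fun N hN => or_iff_not_imp_left.2 (hcon N hN)⟩
      obtain ⟨N, hN, hb, ht⟩ := this
      have := hsub N ht
      have : Group.IsNilpotent (G ⧸ N) := by
        have hd : Nat.card (G ⧸ N) ∣ n := hG ▸ N.card_quotient_dvd_card
        refine ih (Nat.card (G ⧸ N)) ?_ _ rfl (hn.of_dvd hn0 hd)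
        have h1 := N.card_eq_card_quotient_mul_card_subgroup
        have h2 := N.one_lt_card_iff_ne_bot.2 hb
        have h3 : 0 < Nat.card (G ⧸ N) := Nat.card_pos
        rw [← hG, h1]
        exact lt_mul_of_one_lt_right h3 h2
      exact Group.isSolvable_of_ker_le_range N.subtype (QuotientGroup.mk' N) (by simp)
  obtain ⟨C, _, f, hC, hf⟩ := exists_normal_prime_index (G := G)
  generalize hp : Nat.card C = p at hC
  have : Fact p.Prime := ⟨hC⟩
  let M := f.ker
  have hMi : M.index = p := by
    rw [Subgroup.index_ker, MonoidHom.range_eq_top.2 hf, Subgroup.card_top, hp]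
  have hMt : M ≠ ⊤ := by
    intro h
    rw [h, Subgroup.index_top] at hMi
    exact hC.one_lt.ne hMi
  have := hsub M hMt
  have hq : ∀ q : ℕ, q.Prime → q ≠ p → ∃ Q : Sylow q G, (Q : Subgroup G).Normal := by
    intro q hq hqp
    have : Fact q.Prime := ⟨hq⟩
    let Q0 : Sylow q M := default
    have h0 : (Q0 : Subgroup M).Normal :=  inferInstance
    have h1 : (Q0 : Subgroup M).Characteristic := Q0.characteristic_of_normal h0
    have h2 : ((Q0 : Subgroup M).map M.subtype).Normal := inferInstance
    refine ⟨Sylow.ofCard ((Q0 : Subgroup M).map M.subtype) ?_, by rw [Sylow.coe_ofCard]; exact h2⟩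
    rw [Subgroup.card_map_of_injective M.subtype_injective, Q0.card_eq_multiplicity,
      ← M.index_mul_card, hMi, Nat.factorization_mul hC.ne_zero Nat.card_pos.ne']
    simp [hC.factorization, Finsupp.single_apply, hqp.symm]
  refine ((Group.isNilpotent_of_finite_tfae (G := G)).out 0 3).2 ?_
  intro q hqF P
  have hqP := hqF.out
  by_cases hqp : q = p
  · subst hqp
    rw [← Subgroup.normalizer_eq_top_iff]
    apply eq_top_of_sylow
    intro r hr hrn
    by_cases hrq : r = q
    · subst hrq
      exact ⟨P, Subgroup.le_normalizer⟩
    · obtain ⟨Q, hQ⟩ := hq r hr hrq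
      refine ⟨Q, le_trans ?_ (Subgroup.centralizer_le_normalizer _)⟩
      intro x hx
      rw [Subgroup.mem_centralizer_iff]
      intro y hy
      have : Fact r.Prime := ⟨hr⟩
      letI : MulDistribMulAction P (Q : Subgroup G) :=
        MulDistribMulAction.compHom _ ((MulAut.conjNormal (H := (Q : Subgroup G))).comp
          (P : Subgroup G).subtype)
      have hqn : q ∈ n.primeFactors := Nat.mem_primeFactors.2 ⟨hqP, by
        rw [← hG, ← M.index_mul_card, hMi]; exact dvd_mul_right _ _, hn0⟩
      have h1 := coprime_action hqP hr (Ne.symm hrq) P.isPGroup' (Q.card_eq_multiplicity)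
        (hG ▸ hn q hqn r (Nat.mem_primeFactors.2 ⟨hr, hG ▸ hrn, hn0⟩) (Ne.symm hrq))
        ⟨y, hy⟩ ⟨x, hx⟩
      have h2 : y * x * y⁻¹ = x := congrArg Subtype.val h1
      exact mul_inv_eq_iff_eq_mul.1 h2
  · obtain ⟨Q, hQ⟩ := hq q hqP hqp
    have := Sylow.unique_of_normal Q hQ
    rw [Subsingleton.elim P Q]
    exact hQ

theorem exists_invariant_hom {n : ℕ} (hn : NilNum n) (hn0 : n ≠ 0) {G : Type*} {B : Type u} [Group G] [Finite G]
    [Group B] [Finite B] [Nontrivial B] [MulDistribMulAction G B] (hG : Nat.card G ∣ n)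
    (hB : Nat.card B ∣ n) : ∃ (C : Type u) (_ : CommGroup C) (f : B →* C), f ≠ 1 ∧
      ∀ (g : G) (b : B), f (g • b) = f b := by
  have hnil : Group.IsNilpotent B := nilNum_nilpotent _ B rfl (hn.of_dvd hn0 hB)
  obtain ⟨C, _, f, hC, hf⟩ := exists_normal_prime_index (G := B)
  generalize hp : Nat.card C = p at hC
  have : Fact p.Prime := ⟨hC⟩
  have : Finite C := Nat.finite_of_card_ne_zero (hp ▸ hC.ne_zero)
  have : Finite (B →* C) := DFunLike.finite _
  have hCnt : Nontrivial C := Finite.one_lt_card_iff_nontrivial.1 (hp ▸ hC.one_lt)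
  have hpC : ∀ c : C, c ^ p = 1 := fun c => by rw [← hp]; exact pow_card_eq_one'
  have hpB : p ∣ Nat.card B := by
    rw [← hp]; exact Subgroup.card_dvd_of_surjective f hf
  letI act : MulAction G (B →* C) :=
    { smul := fun g φ => φ.comp (MulDistribMulAction.toMonoidHom B g⁻¹)
      one_smul := fun φ => by
        ext b
        change φ ((1 : G)⁻¹ • b) = φ b
        simp
      mul_smul := fun g k φ => by
        ext b
        change φ ((g * k)⁻¹ • b) = φ (k⁻¹ • g⁻¹ • b)
        rw [mul_inv_rev, mul_smul] }
  have hact : ∀ (g : G) (φ : B →* C) (b : B), (g • φ) b = φ (g⁻¹ • b) := fun _ _ _ => rfl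
  have hf1 : f ≠ 1 := by
    rintro rfl
    obtain ⟨c, hc⟩ := exists_ne (1 : C)
    obtain ⟨b, hb⟩ := hf c
    exact hc hb.symm
  have hpX : p ∣ Nat.card (B →* C) := by
    have : orderOf f = p := orderOf_eq_prime (by ext b; exact hpC _) hf1
    rw [← this]; exact orderOf_dvd_natCard f
  let S : Sylow p G := default
  obtain ⟨φ, hφ, hφ1⟩ := S.isPGroup'.exists_fixed_point_of_prime_dvd_card_of_fixed_point (B →* C) hpX
    (a := 1) (fun g => by ext b; rfl)
  let P : Sylow p B := default
  have hPn : (P : Subgroup B).Normal := inferInstance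
  have hPc : (P : Subgroup B).Characteristic := P.characteristic_of_normal hPn
  have hst : MulAction.stabilizer G φ = ⊤ := by
    apply eq_top_of_sylow
    intro r hr hrn
    have : Fact r.Prime := ⟨hr⟩
    by_cases hrp : r = p
    · subst hrp
      exact ⟨S, fun g hg => hφ ⟨g, hg⟩⟩
    · refine ⟨default, ?_⟩
      generalize (default : Sylow r G) = R
      have hinv : ∀ (g : G) (x : B), x ∈ (P : Subgroup B) → g • x ∈ (P : Subgroup B) := by
        intro g x hx
        have h := Subgroup.characteristic_iff_le_comap.1 hPc (MulDistribMulAction.toMulEquiv B g)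
        exact h hx
      letI : MulDistribMulAction R (P : Subgroup B) :=
        { smul := fun g x => ⟨(g : G) • (x : B), hinv g x x.2⟩
          one_smul := fun x => Subtype.ext (one_smul G (x : B))
          mul_smul := fun g k x => Subtype.ext (mul_smul (g : G) (k : G) (x : B))
          smul_mul := fun g x y => Subtype.ext (smul_mul' (g : G) (x : B) (y : B))
          smul_one := fun g => Subtype.ext (smul_one (g : G)) }
      have hfix : ∀ g ∈ R, ∀ x ∈ P, g • x = x := by
        intro g hg x hx
        have hrn' : r ∈ n.primeFactors := Nat.mem_primeFactors.2 ⟨hr, hrn.trans hG, hn0⟩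
        have hpn' : p ∈ n.primeFactors := Nat.mem_primeFactors.2 ⟨hC, hpB.trans hB, hn0⟩
        have h1 := coprime_action hr hC hrp R.isPGroup' P.card_eq_multiplicity
          (fun k hk1 hk2 => hn r hrn' p hpn' hrp k hk1
            (hk2.trans ((Nat.factorization_le_iff_dvd Nat.card_pos.ne' hn0).2 hB p)))
          ⟨g, hg⟩ ⟨x, hx⟩
        exact congrArg Subtype.val h1
      intro g hg
      rw [MulAction.mem_stabilizer_iff]
      ext b
      rw [hact]
      let m := (P : Subgroup B).index
      have hbm : b ^ m ∈ (P : Subgroup B) := Subgroup.pow_index_mem _ b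
      have h1 := hfix g⁻¹ (R.inv_mem hg) _ hbm
      have h2 : φ (g⁻¹ • b) ^ m = φ b ^ m := by
        rw [← map_pow, ← map_pow, ← smul_pow', h1]
      have hco : (Nat.card C).Coprime m := by
        rw [hp, Nat.Prime.coprime_iff_not_dvd hC]
        exact P.not_dvd_index
      exact (powCoprime hco).injective h2
  refine ⟨C, inferInstance, φ, hφ1.symm, fun g b => ?_⟩
  have : g⁻¹ ∈ MulAction.stabilizer G φ := by rw [hst]; trivial
  have h := DFunLike.congr_fun (MulAction.mem_stabilizer_iff.1 this) b
  rw [hact, inv_inv] at h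
  exact h

section Brace
variable {A : Type} [SkewBrace A]

def lam (a b : A) : A := -a + a * b

theorem lam_add (a b c : A) : lam a (b + c) = lam a b + lam a c := by
  simp only [lam, SkewBrace.skew_left_distrib, sub_eq_add_neg, add_assoc]

theorem lam_zero (a : A) : lam a 0 = 0 := by
  have h := lam_add a 0 0
  rw [add_zero] at h
  simpa using h

theorem brace_mul_zero (a : A) : a * 0 = a := by
  have h := lam_zero a
  unfold lam at h
  exact (neg_add_eq_zero.1 h).symm

theorem brace_zero_eq_one : (0 : A) = 1 := by
  have h := brace_mul_zero (1 : A)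
  rwa [one_mul] at h

theorem lam_one (b : A) : lam 1 b = b := by
  unfold lam
  rw [← brace_zero_eq_one (A := A), neg_zero, zero_add, brace_zero_eq_one, one_mul]

theorem lam_neg (a b : A) : lam a (-b) = - lam a b := by
  apply eq_neg_of_add_eq_zero_left
  rw [← lam_add, neg_add_cancel, lam_zero]

theorem lam_mul (a b c : A) : lam (a * b) c = lam a (lam b c) := by
  have h : lam b c = -b + b * c := rfl
  rw [h, lam_add, lam_neg]
  unfold lam
  rw [neg_add_rev, neg_neg, mul_assoc]
  simp [add_assoc]

theorem leftSeries_inv (m : ℕ) : ∀ a b : A, b ∈ leftSeries A m → lam a b ∈ leftSeries A m := by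
  induction m with
  | zero => intros; trivial
  | succ m ih =>
    intro a b hb
    let φ : A →+ A := ⟨⟨lam a, lam_zero a⟩, lam_add a⟩
    have : leftSeries A (m + 1) ≤ (leftSeries A (m + 1)).comap φ := by
      conv_lhs => rw [leftSeries]
      rw [AddSubgroup.closure_le]
      rintro x ⟨c, d, hd, rfl⟩
      change lam a (lam c d - d) ∈ leftSeries A (m + 1)
      have e : lam a (lam c d - d) = (lam (a * c) d - d) - (lam a d - d) := by
        rw [sub_eq_add_neg, lam_add, lam_neg, lam_mul]
        simp [sub_eq_add_neg, add_assoc]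
      rw [e]
      exact AddSubgroup.sub_mem _ (AddSubgroup.subset_closure ⟨_, d, hd, rfl⟩)
        (AddSubgroup.subset_closure ⟨_, d, hd, rfl⟩)
    exact this hb

theorem leftSeries_le (m : ℕ) : leftSeries A (m + 1) ≤ leftSeries A m := by
  rw [leftSeries, AddSubgroup.closure_le]
  rintro x ⟨c, d, hd, rfl⟩
  exact AddSubgroup.sub_mem _ (leftSeries_inv m c d hd) hd

theorem leftSeries_lt [Finite A] (hn : NilNum (Nat.card A)) (m : ℕ) (hm : leftSeries A m ≠ ⊥) :
    leftSeries A (m + 1) < leftSeries A m := by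
  refine lt_of_le_of_ne (leftSeries_le m) ?_
  intro heq
  let B := leftSeries A m
  letI : MulDistribMulAction A (Multiplicative B) :=
    { smul := fun g x => Multiplicative.ofAdd ⟨lam g (x.toAdd : A), leftSeries_inv m g _ x.toAdd.2⟩
      one_smul := fun x => congrArg Multiplicative.ofAdd (Subtype.ext (lam_one _))
      mul_smul := fun g k x => congrArg Multiplicative.ofAdd (Subtype.ext (lam_mul _ _ _))
      smul_mul := fun g x y => congrArg Multiplicative.ofAdd (Subtype.ext (lam_add _ _ _))
      smul_one := fun g => congrArg Multiplicative.ofAdd (Subtype.ext (lam_zero _)) }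
  have : Nontrivial B := (AddSubgroup.nontrivial_iff_ne_bot _).2 hm
  obtain ⟨C, _, f, hf, hinv⟩ := exists_invariant_hom (G := A) (B := Multiplicative B) hn
    Nat.card_pos.ne' dvd_rfl (AddSubgroup.card_addSubgroup_dvd_card B)
  apply hf
  let f' : B →+ Additive C := f.toAdditiveRight
  have key : leftSeries A (m + 1) ≤ f'.ker.map B.subtype := by
    rw [leftSeries, AddSubgroup.closure_le]
    rintro x ⟨c, d, hd, rfl⟩
    refine ⟨⟨lam c d, leftSeries_inv m c d hd⟩ - ⟨d, hd⟩, ?_, rfl⟩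
    have := hinv c (Multiplicative.ofAdd ⟨d, hd⟩)
    have h2 : f' ⟨lam c d, leftSeries_inv m c d hd⟩ = f' ⟨d, hd⟩ := this
    change f' _ = 0
    rw [map_sub, h2, sub_self]
  rw [heq] at key
  refine MonoidHom.ext fun b => ?_
  obtain ⟨y, hy, hyb⟩ := key b.toAdd.2
  have : y = b.toAdd := Subtype.ext hyb
  subst this
  exact hy

theorem nilNum_leftNilpotent [Finite A] (hn : NilNum (Nat.card A)) : IsLeftNilpotent A := by
  by_contra hcon
  unfold IsLeftNilpotent at hcon
  push Not at hcon
  have h := strictAnti_nat_of_succ_lt (fun m => leftSeries_lt hn m (hcon m))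
  exact not_injective_infinite_finite _ h.injective
end Brace

/-- Every skew brace of order `n` is left-nilpotent iff `p ∤ q^k - 1` for all
distinct primes `p, q` dividing `n` and all `1 ≤ k ≤ α_q`. -/
theorem every_skewBrace_is_left_nilpotent_iff (n : ℕ) (hn : 0 < n) :
    (∀ (A : Type) [Fintype A] [SkewBrace A], Fintype.card A = n →
      IsLeftNilpotent A) ↔
    (∀ p ∈ n.primeFactors, ∀ q ∈ n.primeFactors, p ≠ q →
      ∀ k : ℕ, 1 ≤ k → k ≤ n.factorization q → ¬ p ∣ q ^ k - 1) := by
  constructor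
  · intro h p hp q hq hpq k h1 h2 hd
    obtain ⟨A, _, _, hc, hA⟩ := exists_cex n hn p q k hp hq hpq h1 h2 hd
    exact hA (h A hc)
  · intro h A _ _ hc
    apply nilNum_leftNilpotent
    rw [Nat.card_eq_fintype_card, hc]
    exact h
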